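/- For every (a,c) ∈ k^× × k, the elements y^i x^j ⊗ z_{a,c}, i, j ∈ ℕ, form a k-basis of the Verma module M_{a,c}. -/

import Mathlib

open FreeAlgebra

/-- Generators of the double of the Jordan plane. -/
inductive JGen : Type
  | u | v | zeta | g | ginv | x | y

variable (k : Type) [Field k] [IsAlgClosed k] [CharZero k]

/-- The defining relations of the double of the Jordan plane. -/
inductive JRel : FreeAlgebra k JGen → FreeAlgebra k JGen → Prop
  | gginv : JRel (ι k .g * ι k .ginv) 1
  | ginvg : JRel (ι k .ginv * ι k .g) 1
  | zg : JRel (ι k .zeta * ι k .g) (ι k .g * ι k .zeta)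
  | gx : JRel (ι k .g * ι k .x) (ι k .x * ι k .g)
  | gy : JRel (ι k .g * ι k .y) (ι k .y * ι k .g + ι k .x * ι k .g)
  | zy : JRel (ι k .zeta * ι k .y) (ι k .y * ι k .zeta + ι k .y)
  | zx : JRel (ι k .zeta * ι k .x) (ι k .x * ι k .zeta + ι k .x)
  | ug : JRel (ι k .u * ι k .g) (ι k .g * ι k .u)
  | vg : JRel (ι k .v * ι k .g) (ι k .g * ι k .v + ι k .g * ι k .u)
  | vz : JRel (ι k .v * ι k .zeta) (ι k .zeta * ι k .v + ι k .v)
  | uz : JRel (ι k .u * ι k .zeta) (ι k .zeta * ι k .u + ι k .u)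
  | yx : JRel (ι k .y * ι k .x) (ι k .x * ι k .y - (1/2 : k) • (ι k .x * ι k .x))
  | vu : JRel (ι k .v * ι k .u) (ι k .u * ι k .v - (1/2 : k) • (ι k .u * ι k .u))
  | ux : JRel (ι k .u * ι k .x) (ι k .x * ι k .u)
  | vx : JRel (ι k .v * ι k .x) (ι k .x * ι k .v + (1 - ι k .g) + ι k .x * ι k .u)
  | uy : JRel (ι k .u * ι k .y) (ι k .y * ι k .u + (1 - ι k .g))
  | vy : JRel (ι k .v * ι k .y) (ι k .y * ι k .v - ι k .g * ι k .zeta + ι k .y * ι k .u)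

/-- The double of the Jordan plane, as the presented algebra. -/
def D : Type := RingQuot (JRel k)

noncomputable instance : Ring (D k) := inferInstanceAs (Ring (RingQuot (JRel k)))
noncomputable instance : Algebra k (D k) := inferInstanceAs (Algebra k (RingQuot (JRel k)))

/-- The canonical projection from the free algebra onto `D`. -/
noncomputable def Dmk : FreeAlgebra k JGen →ₐ[k] D k := RingQuot.mkAlgHom k (JRel k)

noncomputable def DU : D k := Dmk k (ι k .u)
noncomputable def DV : D k := Dmk k (ι k .v)
noncomputable def DZ : D k := Dmk k (ι k .zeta)
noncomputable def DG : D k := Dmk k (ι k .g)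
noncomputable def DGinv : D k := Dmk k (ι k .ginv)
noncomputable def DX : D k := Dmk k (ι k .x)
noncomputable def DY : D k := Dmk k (ι k .y)

set_option synthInstance.maxHeartbeats 1000000
set_option maxHeartbeats 2000000

/-- The left ideal of `D` generated by `g - a`, `ζ + c/2`, `u`, `v`. -/
noncomputable def MIdeal (a c : k) : Submodule (D k) (D k) :=
  Submodule.span (D k)
    {DG k - algebraMap k (D k) a, DZ k + algebraMap k (D k) (c / 2), DU k, DV k}

/-- The Verma module `M_{a,c} = D ⊗_{D^{≥0}} T_{a,c}`, realized as the quotient of `D` by the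
left ideal generated by `g - a`, `ζ + c/2`, `u`, `v` (the annihilator in `D^{≥0}` of the
generator `z_{a,c}` of `T_{a,c}`, on which `g` acts by `a`, `ζ` by `-c/2`, and `u`, `v` by `0`).
The class of `1` corresponds to `1 ⊗ z_{a,c}`. -/
noncomputable abbrev Mver (a c : k) : Type := (D k) ⧸ (MIdeal k a c)

/-- The class of `d ∈ D` in `M_{a,c}`. -/
noncomputable def mmk (a c : k) : D k → Mver k a c := Submodule.Quotient.mk
namespace JordanVerma

section rep
variable {k : Type} [Field k]

/-- the carrier of the model of the Verma module -/
abbrev VV (k : Type) [Field k] : Type := (ℕ × ℕ) →₀ k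

noncomputable def ee (k : Type) [Field k] (j i : ℕ) : VV k := Finsupp.single (j, i) 1

noncomputable def XX (k : Type) [Field k] : VV k →ₗ[k] VV k :=
  Finsupp.linearCombination k (fun p : ℕ × ℕ => ee k (p.1 + 1) p.2)

noncomputable def YY (k : Type) [Field k] : VV k →ₗ[k] VV k :=
  Finsupp.linearCombination k
    (fun p : ℕ × ℕ => ee k p.1 (p.2 + 1) - ((p.1 : k) / 2) • ee k (p.1 + 1) p.2)

lemma XX_ee (j i : ℕ) : XX k (ee k j i) = ee k (j + 1) i := by simp [XX, ee]

lemma YY_ee (j i : ℕ) :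
    YY k (ee k j i) = ee k j (i + 1) - ((j : k) / 2) • ee k (j + 1) i := by
  simp [YY, ee]

lemma ext_ee {P Q : VV k →ₗ[k] VV k} (h : ∀ j i, P (ee k j i) = Q (ee k j i)) (w : VV k) :
    P w = Q w := by
  have : P = Q := by
    apply Finsupp.lhom_ext'
    rintro ⟨j, i⟩
    ext1
    simpa [ee] using h j i
  rw [this]

lemma YX (w : VV k) : YY k (XX k w) = XX k (YY k w) - (1/2 : k) • XX k (XX k w) := by
  refine ext_ee (P := YY k ∘ₗ XX k)
    (Q := XX k ∘ₗ YY k - (1/2 : k) • (XX k ∘ₗ XX k)) ?_ w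
  intro j i
  simp only [LinearMap.comp_apply, LinearMap.sub_apply, LinearMap.smul_apply, XX_ee, YY_ee,
    map_sub, map_smul]
  push_cast
  module

/-- induction principle -/
lemma ind {P Q : VV k →ₗ[k] VV k} (h0 : P (ee k 0 0) = Q (ee k 0 0))
    (hx : ∀ w, P w = Q w → P (XX k w) = Q (XX k w))
    (hy : ∀ w, P w = Q w → P (YY k w) = Q (YY k w)) (w : VV k) : P w = Q w := by
  refine ext_ee (fun j i => ?_) w
  induction j with
  | zero =>
    induction i with
    | zero => exact h0
    | succ i ih =>
      have := hy _ ih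
      simpa [YY_ee] using this
  | succ j ih =>
    have := hx _ ih
    simpa [XX_ee] using this

noncomputable def Fy (B Cy : VV k →ₗ[k] VV k) (w0 : VV k) : ℕ → VV k
  | 0 => w0
  | i + 1 => B (Fy B Cy w0 i) + Cy (ee k 0 i)

noncomputable def Fx (A B Cx Cy : VV k →ₗ[k] VV k) (w0 : VV k) : ℕ → ℕ → VV k
  | 0, i => Fy B Cy w0 i
  | j + 1, i => A (Fx A B Cx Cy w0 j i) + Cx (ee k j i)

lemma exists_op (A B Cx Cy : VV k →ₗ[k] VV k) (w0 : VV k)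
    (H1 : ∀ w, B (A w) = A (B w) - (1/2 : k) • A (A w))
    (H2 : ∀ w, B (Cx w) + Cy (XX k w) = A (Cy w) + Cx (YY k w)
      - (1/2 : k) • (A (Cx w) + Cx (XX k w))) :
    ∃ P : VV k →ₗ[k] VV k, P (ee k 0 0) = w0 ∧ (∀ w, P (XX k w) = A (P w) + Cx w) ∧
      ∀ w, P (YY k w) = B (P w) + Cy w := by
  let P : VV k →ₗ[k] VV k :=
    Finsupp.linearCombination k (fun p : ℕ × ℕ => Fx A B Cx Cy w0 p.1 p.2)
  have hP : ∀ j i, P (ee k j i) = Fx A B Cx Cy w0 j i := by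
    intro j i; simp [P, ee]
  have hX : ∀ w, P (XX k w) = A (P w) + Cx w := by
    refine ext_ee (P := P ∘ₗ XX k) (Q := A ∘ₗ P + Cx) ?_
    intro j i
    simp only [LinearMap.comp_apply, LinearMap.add_apply, XX_ee, hP, Fx]
  refine ⟨P, ?_, hX, ?_⟩
  · rw [hP]; simp [Fx, Fy]
  · refine ext_ee (P := P ∘ₗ YY k) (Q := B ∘ₗ P + Cy) ?_
    intro j i
    simp only [LinearMap.comp_apply, LinearMap.add_apply]
    induction j with
    | zero =>
      have : YY k (ee k 0 i) = ee k 0 (i + 1) := by simp [YY_ee]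
      rw [this, hP, hP]; simp [Fx, Fy]
    | succ j ih =>
      rw [← XX_ee]
      generalize ee k j i = w at ih ⊢
      rw [YX, map_sub, map_smul, hX, hX, hX, ih]
      have h1 := H1 (P w)
      have h2 := H2 w
      simp only [map_add] at *
      rw [h1]
      have h3 := sub_eq_zero.2 h2
      rw [← sub_eq_zero, ← neg_eq_zero, ← h3]
      module

theorem exists_rep [CharZero k] (a c : k) (ha : a ≠ 0) : ∃ U V Z G I : VV k →ₗ[k] VV k,
    (G (ee k 0 0) = a • ee k 0 0 ∧ Z (ee k 0 0) = (-(c/2)) • ee k 0 0 ∧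
      U (ee k 0 0) = 0 ∧ V (ee k 0 0) = 0) ∧
    (∀ w, G (I w) = w) ∧ (∀ w, I (G w) = w) ∧
    (∀ w, Z (G w) = G (Z w)) ∧
    (∀ w, G (XX k w) = XX k (G w)) ∧
    (∀ w, G (YY k w) = YY k (G w) + XX k (G w)) ∧
    (∀ w, Z (YY k w) = YY k (Z w) + YY k w) ∧
    (∀ w, Z (XX k w) = XX k (Z w) + XX k w) ∧
    (∀ w, U (G w) = G (U w)) ∧
    (∀ w, V (G w) = G (V w) + G (U w)) ∧
    (∀ w, V (Z w) = Z (V w) + V w) ∧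
    (∀ w, U (Z w) = Z (U w) + U w) ∧
    (∀ w, V (U w) = U (V w) - (1/2 : k) • U (U w)) ∧
    (∀ w, U (XX k w) = XX k (U w)) ∧
    (∀ w, V (XX k w) = XX k (V w) + (w - G w) + XX k (U w)) ∧
    (∀ w, U (YY k w) = YY k (U w) + (w - G w)) ∧
    (∀ w, V (YY k w) = YY k (V w) - G (Z w) + YY k (U w)) := by
  obtain ⟨Z, Z0, ZX, ZY⟩ := exists_op (XX k) (YY k) (XX k) (YY k) ((-(c/2)) • ee k 0 0) YX
    (by intro w; rw [YX]; module)
  obtain ⟨G, G0, GX, GY⟩ := exists_op (XX k) (YY k + XX k) 0 0 (a • ee k 0 0)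
    (by intro w; simp only [LinearMap.add_apply, map_add, YX]; module) (by intro w; simp)
  obtain ⟨I, I0, IX, IY⟩ := exists_op (XX k) (YY k - XX k) 0 0 (a⁻¹ • ee k 0 0)
    (by intro w; simp only [LinearMap.sub_apply, map_sub, YX]; module) (by intro w; simp)
  simp only [LinearMap.zero_apply, add_zero, LinearMap.add_apply, LinearMap.sub_apply]
    at GX GY IX IY
  obtain ⟨U, U0, UX, UY⟩ := exists_op (XX k) (YY k) 0 (LinearMap.id - G) 0 YX
    (by intro w; simp [GX])
  simp only [LinearMap.zero_apply, add_zero, LinearMap.sub_apply, LinearMap.id_apply] at UX UY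
  obtain ⟨V, V0, VX, VY⟩ := exists_op (XX k) (YY k) (LinearMap.id - G + XX k ∘ₗ U)
    (YY k ∘ₗ U - G ∘ₗ Z) 0 YX
    (by
      intro w
      simp only [LinearMap.add_apply, LinearMap.sub_apply, LinearMap.id_apply,
        LinearMap.comp_apply, map_add, map_sub, map_smul, UX, UY, GX, GY, ZX, ZY, YX]
      module)
  simp only [LinearMap.add_apply, LinearMap.sub_apply, LinearMap.id_apply,
        LinearMap.comp_apply] at VX VY
  have GI : ∀ w, G (I w) = w := by
    refine ind (P := G ∘ₗ I) (Q := LinearMap.id) ?_ ?_ ?_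
    · simp [G0, I0, ha]
    · intro w h; simp_all
    · intro w h; simp_all
  have IG : ∀ w, I (G w) = w := by
    refine ind (P := I ∘ₗ G) (Q := LinearMap.id) ?_ ?_ ?_
    · simp [G0, I0, ha]
    · intro w h; simp_all
    · intro w h; simp_all
  have ZG : ∀ w, Z (G w) = G (Z w) := by
    refine ind (P := Z ∘ₗ G) (Q := G ∘ₗ Z) ?_ ?_ ?_
    · simp [G0, Z0, smul_smul, mul_comm]
    · intro w h; simp only [LinearMap.comp_apply, map_add, GX, GY, ZX, ZY] at *; rw [h]
    · intro w h; simp only [LinearMap.comp_apply, map_add, GX, GY, ZX, ZY] at *; rw [h]; module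
  have UG : ∀ w, U (G w) = G (U w) := by
    refine ind (P := U ∘ₗ G) (Q := G ∘ₗ U) ?_ ?_ ?_
    · simp [G0, U0]
    · intro w h; simp only [LinearMap.comp_apply, map_add, map_sub, GX, GY, UX, UY] at *; rw [h]
    · intro w h; simp only [LinearMap.comp_apply, map_add, map_sub, GX, GY, UX, UY] at *
      rw [h]; module
  have UZ : ∀ w, U (Z w) = Z (U w) + U w := by
    refine ind (P := U ∘ₗ Z) (Q := Z ∘ₗ U + U) ?_ ?_ ?_
    · simp [Z0, U0]
    · intro w h
      simp only [LinearMap.comp_apply, LinearMap.add_apply, map_add, map_sub, ZX, ZY, UX, UY] at *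
      rw [h]; try simp only [map_add]
      try module
    · intro w h
      simp only [LinearMap.comp_apply, LinearMap.add_apply, map_add, map_sub, ZX, ZY, UX, UY] at *
      rw [h]; try simp only [map_add, ZG]
      try module
  have VG : ∀ w, V (G w) = G (V w) + G (U w) := by
    refine ind (P := V ∘ₗ G) (Q := G ∘ₗ V + G ∘ₗ U) ?_ ?_ ?_
    · simp [G0, V0, U0]
    · intro w h
      simp only [LinearMap.comp_apply, LinearMap.add_apply, map_add, map_sub, GX, GY, UX, UY,
        VX, VY, UG, ZG] at *
      rw [h]; try simp only [map_add]
      try module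
    · intro w h
      simp only [LinearMap.comp_apply, LinearMap.add_apply, map_add, map_sub, GX, GY, UX, UY,
        VX, VY, UG, ZG] at *
      rw [h]; try simp only [map_add]
      try module
  have VZ : ∀ w, V (Z w) = Z (V w) + V w := by
    refine ind (P := V ∘ₗ Z) (Q := Z ∘ₗ V + V) ?_ ?_ ?_
    · simp [Z0, V0]
    · intro w h
      simp only [LinearMap.comp_apply, LinearMap.add_apply, map_add, map_sub, ZX, ZY, UX, UY,
        VX, VY, UZ, ZG] at *
      rw [h]; try simp only [map_add]
      try module
    · intro w h
      simp only [LinearMap.comp_apply, LinearMap.add_apply, map_add, map_sub, ZX, ZY, UX, UY,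
        VX, VY, UZ, ZG] at *
      rw [h]; try simp only [map_add]
      try module
  have VU : ∀ w, V (U w) = U (V w) - (1/2 : k) • U (U w) := by
    refine ind (P := V ∘ₗ U) (Q := U ∘ₗ V - (1/2 : k) • (U ∘ₗ U)) ?_ ?_ ?_
    · simp [U0, V0]
    · intro w h
      simp only [LinearMap.comp_apply, LinearMap.add_apply, LinearMap.sub_apply,
        LinearMap.smul_apply, map_add, map_sub, UX, UY, VX, VY, UG] at *
      rw [h]; simp only [map_sub, map_smul]; module
    · intro w h
      simp only [LinearMap.comp_apply, LinearMap.add_apply, LinearMap.sub_apply,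
        LinearMap.smul_apply, map_add, map_sub, UX, UY, VX, VY, UG, UZ, VG] at *
      rw [h]; simp only [map_sub, map_smul]; module
  refine ⟨U, V, Z, G, I, ⟨G0, Z0, U0, V0⟩, GI, IG, ZG, GX, GY, ZY, ZX, UG, VG, VZ, UZ, VU, UX,
    fun w => ?_, UY, fun w => ?_⟩
  · rw [VX]; module
  · rw [VY]; module

/-- straightening -/
noncomputable def Sf (k : Type) [Field k] : ℕ → ℕ → VV k
  | 0, j => ee k j 0
  | i + 1, j => (Finsupp.lmapDomain k k (fun p : ℕ × ℕ => (p.1, p.2 + 1))) (Sf k i j)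
      + ((j : k) / 2) • Sf k i (j + 1)

lemma indep_model : LinearIndependent k
    (fun p : ℕ × ℕ => ((YY k) ^ p.1) (((XX k) ^ p.2) (ee k 0 0))) := by
  let T := Finsupp.lmapDomain k k (fun p : ℕ × ℕ => (p.1, p.2 + 1))
  let S : VV k →ₗ[k] VV k := Finsupp.linearCombination k (fun p : ℕ × ℕ => Sf k p.2 p.1)
  have hS : ∀ j i, S (ee k j i) = Sf k i j := by intro j i; simp [S, ee]
  have hT : ∀ j i, T (ee k j i) = ee k j (i + 1) := by
    intro j i; simp [T, ee, Finsupp.mapDomain_single]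
  have hSY : ∀ w, S (YY k w) = T (S w) := by
    refine ext_ee (P := S ∘ₗ YY k) (Q := T ∘ₗ S) ?_
    intro j i
    simp only [LinearMap.comp_apply, YY_ee, map_sub, map_smul, hS, Sf]
    simp [T]
  have hX : ∀ j, ((XX k) ^ j) (ee k 0 0) = ee k j 0 := by
    intro j
    induction j with
    | zero => simp
    | succ j ih => rw [pow_succ', Module.End.mul_apply, ih, XX_ee]
  have hY : ∀ i j, S (((YY k) ^ i) (ee k j 0)) = ee k j i := by
    intro i j
    induction i with
    | zero => simp [hS, Sf]
    | succ i ih => rw [pow_succ', Module.End.mul_apply, hSY, ih, hT]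
  apply LinearIndependent.of_comp S
  have : (S ∘ fun p : ℕ × ℕ => ((YY k) ^ p.1) (((XX k) ^ p.2) (ee k 0 0)))
      = (fun q : ℕ × ℕ => (Finsupp.single q 1 : VV k)) ∘ Prod.swap := by
    funext p
    rw [Function.comp_apply, hX, hY]
    rfl
  rw [this]
  exact (Finsupp.linearIndependent_single_one k (ℕ × ℕ)).comp _ Prod.swap_injective

end rep

section spanning
variable {k A M : Type} [Field k] [Ring A] [Algebra k A] [AddCommGroup M]
  [Module k M] [Module A M] [IsScalarTower k A M]

lemma spanning (x y u v z g h : A) (a c : k) (ha : a ≠ 0) (m : M)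
    (hg : h * g = 1) (gh : g * h = 1)
    (gx : g * x = x * g) (gy : g * y = y * g + x * g)
    (zy : z * y = y * z + y) (zx : z * x = x * z + x)
    (yx : y * x = x * y - (1/2 : k) • (x * x))
    (ux : u * x = x * u) (vx : v * x = x * v + (1 - g) + x * u)
    (uy : u * y = y * u + (1 - g)) (vy : v * y = y * v - g * z + y * u)
    (gm : g • m = a • m) (zm : z • m = (-(c/2)) • m) (um : u • m = 0) (vm : v • m = 0) :
    let S := Submodule.span k (Set.range fun p : ℕ × ℕ => (y ^ p.1 * x ^ p.2) • m)
    m ∈ S ∧ (∀ w ∈ S, x • w ∈ S) ∧ (∀ w ∈ S, y • w ∈ S) ∧ (∀ w ∈ S, u • w ∈ S) ∧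
    (∀ w ∈ S, v • w ∈ S) ∧ (∀ w ∈ S, z • w ∈ S) ∧ (∀ w ∈ S, g • w ∈ S) ∧
    (∀ w ∈ S, h • w ∈ S) := by
  intro S
  have basic : ∀ i j, (y ^ i * x ^ j) • m ∈ S := fun i j => Submodule.subset_span ⟨(i, j), rfl⟩
  have m0 : m ∈ S := by simpa using basic 0 0
  have closed : ∀ d : A, (∀ i j, d • (y ^ i * x ^ j) • m ∈ S) → ∀ w ∈ S, d • w ∈ S := by
    intro d hd w hw
    induction hw using Submodule.span_induction with
    | mem w hw => obtain ⟨p, rfl⟩ := hw; exact hd _ _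
    | zero => rw [smul_zero]; exact S.zero_mem
    | add p q _ _ hp hq => rw [smul_add]; exact S.add_mem hp hq
    | smul r p _ hp => rw [smul_algebra_smul_comm]; exact S.smul_mem _ hp
  have cy : ∀ w ∈ S, y • w ∈ S := by
    apply closed
    intro i j
    rw [smul_smul, ← mul_assoc, ← pow_succ']
    exact basic _ _
  have yxn : ∀ n : ℕ, x ^ n * y = y * x ^ n + ((n : k) / 2) • x ^ (n + 1) := by
    intro n
    induction n with
    | zero => simp
    | succ n ih =>
      have hxy : x * y = y * x + (1/2 : k) • (x * x) := by rw [yx]; module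
      rw [pow_succ', mul_assoc, ih, mul_add, ← mul_assoc, hxy, add_mul, mul_assoc y,
        mul_smul_comm, smul_mul_assoc, mul_assoc x x, ← pow_succ', ← pow_succ']
      push_cast
      module
  have xyx : ∀ i n j, (x ^ n * (y ^ i * x ^ j)) • m ∈ S := by
    intro i
    induction i with
    | zero => intro n j; rw [pow_zero, one_mul, ← pow_add]; simpa using basic 0 (n + j)
    | succ i ih =>
      intro n j
      have : x ^ n * (y ^ (i + 1) * x ^ j) = y * (x ^ n * (y ^ i * x ^ j))
          + ((n : k) / 2) • (x ^ (n + 1) * (y ^ i * x ^ j)) := by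
        rw [pow_succ' y, mul_assoc, ← mul_assoc (x ^ n), yxn, add_mul, smul_mul_assoc, mul_assoc]
      rw [this, add_smul, mul_smul, smul_assoc]
      exact S.add_mem (cy _ (ih _ _)) (S.smul_mem _ (ih _ _))
  have cx : ∀ w ∈ S, x • w ∈ S := by
    apply closed
    intro i j
    rw [smul_smul]
    simpa using xyx i 1 j
  have key : ∀ d : A, d • m ∈ S → (∀ w ∈ S, d • w ∈ S → d • x • w ∈ S) →
      (∀ w ∈ S, d • w ∈ S → d • y • w ∈ S) → ∀ w ∈ S, d • w ∈ S := by
    intro d hm hx hy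
    apply closed
    intro i j
    induction i with
    | zero =>
      induction j with
      | zero => simpa using hm
      | succ j ih =>
        have := hx _ (basic _ _) ih
        rw [smul_smul x] at this
        simpa [pow_succ'] using this
    | succ i ih =>
      have := hy _ (basic _ _) ih
      rw [smul_smul y, ← mul_assoc, ← pow_succ'] at this
      exact this
  have cz : ∀ w ∈ S, z • w ∈ S := by
    refine key z (by rw [zm]; exact S.smul_mem _ m0) ?_ ?_
    · intro w hw h; rw [smul_smul, zx, add_smul, mul_smul]
      exact S.add_mem (cx _ h) (cx _ hw)
    · intro w hw h; rw [smul_smul, zy, add_smul, mul_smul]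
      exact S.add_mem (cy _ h) (cy _ hw)
  have cg : ∀ w ∈ S, g • w ∈ S := by
    refine key g (by rw [gm]; exact S.smul_mem _ m0) ?_ ?_
    · intro w hw h; rw [smul_smul, gx, mul_smul]
      exact cx _ h
    · intro w hw h; rw [smul_smul, gy, add_smul, mul_smul, mul_smul]
      exact S.add_mem (cy _ h) (cx _ h)
  have hx : h * x = x * h := by
    calc h * x = h * x * (g * h) := by rw [gh, mul_one]
      _ = h * (x * g) * h := by noncomm_ring
      _ = (h * g) * (x * h) := by rw [← gx]; noncomm_ring
      _ = x * h := by rw [hg, one_mul]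
  have hy : h * y = y * h - x * h := by
    have : y * h = h * y + h * x := by
      calc y * h = (h * g) * (y * h) := by rw [hg, one_mul]
        _ = h * (g * y) * h := by noncomm_ring
        _ = h * y * (g * h) + h * x * (g * h) := by rw [gy]; noncomm_ring
        _ = _ := by rw [gh, mul_one, mul_one]
    rw [this, hx]; abel
  have hm : h • m = a⁻¹ • m := by
    have h1 : h • g • m = m := by rw [smul_smul, hg, one_smul]
    rw [gm, smul_algebra_smul_comm] at h1
    calc h • m = a⁻¹ • a • h • m := by rw [smul_smul, inv_mul_cancel₀ ha, one_smul]
      _ = a⁻¹ • m := by rw [h1]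
  have ch : ∀ w ∈ S, h • w ∈ S := by
    refine key h (by rw [hm]; exact S.smul_mem _ m0) ?_ ?_
    · intro w hw h; rw [smul_smul, hx, mul_smul]
      exact cx _ h
    · intro w hw h; rw [smul_smul, hy, sub_smul, mul_smul, mul_smul]
      exact S.sub_mem (cy _ h) (cx _ h)
  have cu : ∀ w ∈ S, u • w ∈ S := by
    refine key u (by rw [um]; exact S.zero_mem) ?_ ?_
    · intro w hw h; rw [smul_smul, ux, mul_smul]
      exact cx _ h
    · intro w hw h; rw [smul_smul, uy, add_smul, mul_smul, sub_smul, one_smul]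
      exact S.add_mem (cy _ h) (S.sub_mem hw (cg _ hw))
  have cv : ∀ w ∈ S, v • w ∈ S := by
    refine key v (by rw [vm]; exact S.zero_mem) ?_ ?_
    · intro w hw h
      rw [smul_smul, vx, add_smul, add_smul, mul_smul, mul_smul, sub_smul, one_smul]
      exact S.add_mem (S.add_mem (cx _ h) (S.sub_mem hw (cg _ hw))) (cx _ (cu _ hw))
    · intro w hw h
      rw [smul_smul, vy, add_smul, sub_smul, mul_smul, mul_smul, mul_smul]
      exact S.add_mem (S.sub_mem (cy _ h) (cg _ (cz _ hw))) (cy _ (cu _ hw))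
  exact ⟨m0, cx, cy, cu, cv, cz, cg, ch⟩

end spanning

section final
variable {k : Type} [Field k] [IsAlgClosed k] [CharZero k]

lemma Dmk_rel {p q : FreeAlgebra k JGen} (h : JRel k p q) : Dmk k p = Dmk k q :=
  RingQuot.mkAlgHom_rel k h

lemma Dmk_surj : Function.Surjective (Dmk k) := RingQuot.mkAlgHom_surjective k (JRel k)

lemma exists_hom (a c : k) (ha : a ≠ 0) : ∃ ψ : D k →ₐ[k] Module.End k (VV k),
    ψ (DX k) = XX k ∧ ψ (DY k) = YY k ∧
    ψ (DG k) (ee k 0 0) = a • ee k 0 0 ∧ ψ (DZ k) (ee k 0 0) = (-(c/2)) • ee k 0 0 ∧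
    ψ (DU k) (ee k 0 0) = 0 ∧ ψ (DV k) (ee k 0 0) = 0 := by
  obtain ⟨U, V, Z, G, I, ⟨G0, Z0, U0, V0⟩, GI, IG, ZG, GX, GY, ZY, ZX, UG, VG, VZ, UZ, VU, UX,
    VX, UY, VY⟩ := exists_rep a c ha
  let f : JGen → Module.End k (VV k) := fun s => match s with
    | .u => U | .v => V | .zeta => Z | .g => G | .ginv => I | .x => XX k | .y => YY k
  let F : FreeAlgebra k JGen →ₐ[k] Module.End k (VV k) := FreeAlgebra.lift k f
  have hF : ∀ s, F (ι k s) = f s := fun s => FreeAlgebra.lift_ι_apply f s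
  have hrel : ∀ ⦃p q⦄, JRel k p q → F p = F q := by
    intro p q h
    cases h <;>
      simp only [map_mul, map_add, map_sub, map_smul, map_one, hF, f] <;>
      apply LinearMap.ext <;> intro w <;>
      simp only [Module.End.mul_apply, LinearMap.add_apply, LinearMap.sub_apply,
        LinearMap.smul_apply, Module.End.one_apply]
    all_goals first
      | exact GI w | exact IG w | exact ZG w | exact GX w | exact GY w | exact ZY w | exact ZX w
      | exact UG w | exact VG w | exact VZ w | exact UZ w | exact VU w | exact UX w | exact VX w
      | exact UY w | exact VY w | exact YX w
  let ψ : D k →ₐ[k] Module.End k (VV k) := RingQuot.liftAlgHom k ⟨F, hrel⟩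
  have hψ : ∀ s, ψ (Dmk k (ι k s)) = f s := by
    intro s
    rw [← hF s]
    exact RingQuot.liftAlgHom_mkAlgHom_apply k F hrel (ι k s)
  refine ⟨ψ, hψ .x, hψ .y, ?_, ?_, ?_, ?_⟩
  · rw [DG, hψ]; exact G0
  · rw [DZ, hψ]; exact Z0
  · rw [DU, hψ]; exact U0
  · rw [DV, hψ]; exact V0

lemma mmk_smul (a c : k) (d e : D k) : mmk k a c (d * e) = d • mmk k a c e := rfl

end final

end JordanVerma

open JordanVerma in
/-- the elements `y^i x^j ⊗ z_{a,c}`, `i, j ∈ ℕ`, form a `k`-basis of the Verma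
module `M_{a,c}`. -/
theorem basis_Verma (a c : k) (ha : a ≠ 0) :
    LinearIndependent k (fun p : ℕ × ℕ => mmk k a c ((DY k) ^ p.1 * (DX k) ^ p.2)) ∧
      Submodule.span k
        (Set.range fun p : ℕ × ℕ => mmk k a c ((DY k) ^ p.1 * (DX k) ^ p.2)) = ⊤ := by
  constructor
  · obtain ⟨ψ, hx, hy, hg, hz, hu, hv⟩ := exists_hom a c ha
    have kill : ∀ d ∈ MIdeal k a c, ψ d (ee k 0 0) = 0 := by
      intro d hd
      unfold MIdeal at hd
      induction hd using Submodule.span_induction with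
      | mem d hd =>
        rcases hd with rfl | rfl | rfl | rfl
        · rw [map_sub, LinearMap.sub_apply, hg, AlgHom.commutes, Module.algebraMap_end_apply,
            sub_self]
        · rw [map_add, LinearMap.add_apply, hz, AlgHom.commutes, Module.algebraMap_end_apply]
          module
        · exact hu
        · exact hv
      | zero => simp
      | add p q _ _ hp hq => rw [map_add, LinearMap.add_apply, hp, hq, add_zero]
      | smul r p _ hp => rw [smul_eq_mul, map_mul, Module.End.mul_apply, hp, map_zero]
    let L : D k →ₗ[k] VV k := (LinearMap.applyₗ (ee k 0 0)) ∘ₗ ψ.toLinearMap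
    have hL : ∀ d, L d = ψ d (ee k 0 0) := fun d => rfl
    let L' : Mver k a c →ₗ[k] VV k :=
      ((MIdeal k a c).restrictScalars k).liftQ L (fun d hd => kill d hd)
    apply LinearIndependent.of_comp L'
    have : (L' ∘ fun p : ℕ × ℕ => mmk k a c ((DY k) ^ p.1 * (DX k) ^ p.2))
        = (fun p : ℕ × ℕ => ((YY k) ^ p.1) (((XX k) ^ p.2) (ee k 0 0))) := by
      funext p
      have : L' (mmk k a c ((DY k) ^ p.1 * (DX k) ^ p.2)) = L ((DY k) ^ p.1 * (DX k) ^ p.2) := rfl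
      rw [Function.comp_apply, this, hL, map_mul, map_pow, map_pow, hx, hy, Module.End.mul_apply]
    rw [this]
    exact indep_model
  · have zero_of : ∀ d ∈ MIdeal k a c, d • mmk k a c 1 = 0 := by
      intro d hd
      rw [← mmk_smul, mul_one]
      exact (Submodule.Quotient.mk_eq_zero _).2 hd
    have mem : ∀ d ∈ ({DG k - algebraMap k (D k) a, DZ k + algebraMap k (D k) (c / 2),
        DU k, DV k} : Set (D k)), d • mmk k a c 1 = 0 :=
      fun d hd => zero_of d (Submodule.subset_span hd)
    have R : ∀ {p q}, JRel k p q → Dmk k p = Dmk k q := fun h => Dmk_rel h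
    have sp := spanning (k := k) (DX k) (DY k) (DU k) (DV k) (DZ k) (DG k) (DGinv k) a c ha
      (mmk k a c 1)
      (by simpa [DG, DGinv] using R JRel.ginvg)
      (by simpa [DG, DGinv] using R JRel.gginv)
      (by simpa only [map_mul, map_add, map_sub, map_smul, map_one,
        DX, DY, DU, DV, DZ, DG] using R JRel.gx)
      (by simpa only [map_mul, map_add, map_sub, map_smul, map_one,
        DX, DY, DU, DV, DZ, DG] using R JRel.gy)
      (by simpa only [map_mul, map_add, map_sub, map_smul, map_one,
        DX, DY, DU, DV, DZ, DG] using R JRel.zy)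
      (by simpa only [map_mul, map_add, map_sub, map_smul, map_one,
        DX, DY, DU, DV, DZ, DG] using R JRel.zx)
      (by simpa only [map_mul, map_add, map_sub, map_smul, map_one,
        DX, DY, DU, DV, DZ, DG] using R JRel.yx)
      (by simpa only [map_mul, map_add, map_sub, map_smul, map_one,
        DX, DY, DU, DV, DZ, DG] using R JRel.ux)
      (by simpa only [map_mul, map_add, map_sub, map_smul, map_one,
        DX, DY, DU, DV, DZ, DG] using R JRel.vx)
      (by simpa only [map_mul, map_add, map_sub, map_smul, map_one,
        DX, DY, DU, DV, DZ, DG] using R JRel.uy)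
      (by simpa only [map_mul, map_add, map_sub, map_smul, map_one,
        DX, DY, DU, DV, DZ, DG] using R JRel.vy)
      (by
        have := mem (DG k - algebraMap k (D k) a) (by simp)
        rw [sub_smul, algebraMap_smul] at this
        exact sub_eq_zero.1 this)
      (by
        have := mem (DZ k + algebraMap k (D k) (c / 2)) (by simp)
        rw [add_smul, algebraMap_smul] at this
        rw [neg_smul]
        exact eq_neg_of_add_eq_zero_left this)
      (mem _ (by simp)) (mem _ (by simp))
    have hfun : (fun p : ℕ × ℕ => mmk k a c ((DY k) ^ p.1 * (DX k) ^ p.2))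
        = fun p : ℕ × ℕ => ((DY k) ^ p.1 * (DX k) ^ p.2) • mmk k a c 1 := by
      funext p; rw [← mmk_smul, mul_one]
    rw [hfun]
    generalize Submodule.span k
      (Set.range fun p : ℕ × ℕ => ((DY k) ^ p.1 * (DX k) ^ p.2) • mmk k a c 1) = S at sp ⊢
    obtain ⟨m0, cx, cy, cu, cv, cz, cg, ch⟩ := sp
    have all : ∀ f : FreeAlgebra k JGen, ∀ w ∈ S, Dmk k f • w ∈ S := by
      intro f
      induction f using FreeAlgebra.induction with
      | grade0 r =>
        intro w hw
        rw [AlgHom.commutes, algebraMap_smul]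
        exact S.smul_mem _ hw
      | grade1 s =>
        cases s
        · exact cu
        · exact cv
        · exact cz
        · exact cg
        · exact ch
        · exact cx
        · exact cy
      | mul p q hp hq => intro w hw; rw [map_mul, mul_smul]; exact hp _ (hq _ hw)
      | add p q hp hq => intro w hw; rw [map_add, add_smul]; exact S.add_mem (hp _ hw) (hq _ hw)
    rw [eq_top_iff]
    intro w _
    obtain ⟨d, rfl⟩ := Submodule.Quotient.mk_surjective _ w
    obtain ⟨f, rfl⟩ := Dmk_surj (k := k) d
    have := all f _ m0
    rw [← mmk_smul, mul_one] at this
    exact this
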